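/- arXiv:2001.03971 — 2 statements merged into one kernel-verified Lean document; each statement's English description precedes it below -/
import Mathlib

section
/- Let X be an MV-algebra and let x₁, x₂ be Boolean elements with x₁ ∨ x₂ = 1 and x₁ ∧ x₂ = 0. Then X is isomorphic as an MV-algebra to the product (-∞, x₁] × (-∞, x₂], via the map z ↦ (z ∧ x₁, z ∧ x₂). -/
/-- An MV-algebra: an abelian monoid `(X, add, zero)` with a unary `neg` satisfying
`x ⊕ ¬0 = ¬0`, `¬¬x = x`, and `¬(¬x ⊕ y) ⊕ y = ¬(¬y ⊕ x) ⊕ x`. -/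
structure MVAlg (X : Type) where
  add : X → X → X
  zero : X
  neg : X → X
  add_assoc : ∀ a b c : X, add (add a b) c = add a (add b c)
  add_comm : ∀ a b : X, add a b = add b a
  zero_add : ∀ a : X, add zero a = a
  add_neg_zero : ∀ a : X, add a (neg zero) = neg zero
  neg_neg : ∀ a : X, neg (neg a) = a
  lukasiewicz : ∀ a b : X, add (neg (add (neg a) b)) b = add (neg (add (neg b) a)) a

namespace MVAlg

variable {X : Type}

/-- `1 = ¬0`. -/
def one (M : MVAlg X) : X := M.neg M.zero

/-- `x ⊙ y = ¬(¬x ⊕ ¬y)`. -/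
def mul (M : MVAlg X) (x y : X) : X := M.neg (M.add (M.neg x) (M.neg y))

/-- `x ∨ y = ¬(¬x ⊕ y) ⊕ y`. -/
def sup (M : MVAlg X) (x y : X) : X := M.add (M.neg (M.add (M.neg x) y)) y

/-- `x ∧ y = x ⊙ (¬x ⊕ y)`. -/
def inf (M : MVAlg X) (x y : X) : X := M.mul x (M.add (M.neg x) y)

/-- `x ≤ y` iff `¬x ⊕ y = 1`. -/
def le (M : MVAlg X) (x y : X) : Prop := M.add (M.neg x) y = M.one

/-- The Fibonacci sequence attached to `x, y`: `u₀ = x`, `u₁ = y`, `u_{n+2} = u_n ⊕ u_{n+1}`. -/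
def fibSeq (M : MVAlg X) (x y : X) : ℕ → X
  | 0 => x
  | 1 => y
  | (n+2) => M.add (MVAlg.fibSeq M x y n) (MVAlg.fibSeq M x y (n+1))

/-- Scalar multiple: `0·z = 0`, `(k+1)·z = k·z ⊕ z`. -/
def smul (M : MVAlg X) : ℕ → X → X
  | 0, _ => M.zero
  | (k+1), z => M.add (MVAlg.smul M k z) z

end MVAlg

namespace MVAlg

variable {X : Type}

instance (M : MVAlg X) : Std.Associative M.add := ⟨M.add_assoc⟩
instance (M : MVAlg X) : Std.Commutative M.add := ⟨M.add_comm⟩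

theorem aux_add_zero (M : MVAlg X) (a : X) : M.add a M.zero = a := by
  rw [M.add_comm, M.zero_add]

theorem aux_add_one (M : MVAlg X) (a : X) : M.add a M.one = M.one := M.add_neg_zero a

theorem aux_one_add (M : MVAlg X) (a : X) : M.add M.one a = M.one := by
  rw [M.add_comm, aux_add_one]

theorem aux_neg_one (M : MVAlg X) : M.neg M.one = M.zero := M.neg_neg _

theorem aux_neg_add (M : MVAlg X) (a : X) : M.add (M.neg a) a = M.one := by
  have h := M.lukasiewicz a M.one
  rw [aux_add_one, aux_neg_one, M.zero_add] at h
  exact h.symm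

theorem aux_antisymm (M : MVAlg X) {a b : X} (h : M.le a b) (k : M.le b a) : a = b := by
  have e := M.lukasiewicz a b
  unfold le at h k
  rw [h, k, aux_neg_one, M.zero_add, M.zero_add] at e
  exact e.symm

theorem aux_le_add (M : MVAlg X) (a b : X) : M.le a (M.add a b) := by
  unfold le
  rw [← M.add_assoc, aux_neg_add, aux_one_add]

theorem aux_sup (M : MVAlg X) (w n : X) (hn : M.add n n = n) :
    M.add (M.neg (M.add (M.neg w) n)) n = M.add w n := by
  apply aux_antisymm
  · unfold le
    have e := M.lukasiewicz (M.add (M.neg w) n) n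
    have : M.add (M.neg (M.add (M.neg (M.add (M.neg w) n)) n)) (M.add w n)
      = M.add (M.add (M.neg (M.add (M.neg (M.add (M.neg w) n)) n)) n) w := by ac_rfl
    rw [this, e]
    have : M.add (M.add (M.neg (M.add (M.neg n) (M.add (M.neg w) n))) (M.add (M.neg w) n)) w
      = M.add (M.add (M.neg w) w) (M.add (M.neg (M.add (M.neg n) (M.add (M.neg w) n))) n) := by
      ac_rfl
    rw [this, aux_neg_add, aux_one_add]
  · have : M.add (M.neg (M.add (M.neg w) n)) n
        = M.add (M.add w n) (M.neg (M.add (M.neg n) w)) := by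
      calc M.add (M.neg (M.add (M.neg w) n)) n
          = M.add (M.add (M.neg (M.add (M.neg w) n)) n) n := by rw [M.add_assoc, hn]
        _ = M.add (M.add (M.neg (M.add (M.neg n) w)) w) n := by rw [M.lukasiewicz]
        _ = _ := by ac_rfl
    rw [this]
    exact aux_le_add M _ _

theorem aux_inf (M : MVAlg X) (z b n : X) (hb : M.neg b = n) (hn : M.add n n = n) :
    M.inf z b = M.neg (M.add (M.neg z) n) := by
  have e := M.lukasiewicz n (M.neg z)
  have hc : M.neg n = b := by rw [← hb, M.neg_neg]
  rw [aux_sup M (M.neg z) n hn, hc] at e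
  unfold inf mul
  rw [M.add_comm (M.neg z) (M.neg _), M.add_comm (M.neg z) b, e]

theorem aux_inf' (M : MVAlg X) (z b n : X) (hb : M.neg b = n) (hn : M.add n n = n) :
    M.inf b z = M.neg (M.add (M.neg z) n) := by
  have e := aux_sup M (M.neg z) n hn
  rw [M.neg_neg] at e
  unfold inf mul
  rw [hb, M.add_comm n (M.neg _), M.add_comm n z, e]

theorem aux_le (M : MVAlg X) {p b : X} (h : M.le p b) (hb : M.add b b = b) :
    M.add p b = b := by
  have e := aux_sup M p b hb
  unfold le at h
  rw [h, aux_neg_one, M.zero_add] at e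
  exact e.symm

theorem aux_cancel (M : MVAlg X) {b n u v : X} (hb : M.neg b = n) (hbb : M.add b b = b)
    (h : M.add u n = M.add v n) (k : M.add u b = M.add v b) : u = v := by
  have key : ∀ u v : X, M.add u n = M.add v n → M.add u b = M.add v b → M.le u v := by
    intro u v h k
    have h1 : M.le b (M.add (M.neg u) v) := by
      unfold le
      rw [hb, M.add_comm, M.add_assoc, ← h, ← M.add_assoc, aux_neg_add, aux_one_add]
    have h2 : M.add (M.add (M.neg u) v) b = M.one := by
      rw [M.add_assoc, ← k, ← M.add_assoc, aux_neg_add, aux_one_add]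
    have e := M.lukasiewicz b (M.add (M.neg u) v)
    unfold le at h1 ⊢
    rw [h1, aux_neg_one, M.zero_add] at e
    rw [← h2]
    conv_rhs => rw [e, M.add_assoc, hbb]
    exact e
  exact aux_antisymm M (key u v h k) (key v u h.symm k.symm)

theorem aux_inf_add (M : MVAlg X) (z b n : X) (hb : M.neg b = n) (hn : M.add n n = n) :
    M.add (M.inf z b) n = M.add z n := by
  rw [aux_inf M z b n hb hn, aux_sup M z n hn]

theorem aux_inf_le (M : MVAlg X) (z b n : X) (hb : M.neg b = n) (hn : M.add n n = n) :
    M.le (M.inf z b) b := by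
  unfold le
  rw [aux_inf M z b n hb hn, M.neg_neg, M.add_assoc, ← hb, aux_neg_add, aux_add_one]

theorem aux_half_add (M : MVAlg X) (z w b n : X) (hb : M.neg b = n) (hn : M.add n n = n)
    (hbb : M.add b b = b) : M.inf (M.add z w) b = M.add (M.inf z b) (M.inf w b) := by
  have L := fun z => aux_le M (aux_inf_le M z b n hb hn) hbb
  have A := fun z => aux_inf_add M z b n hb hn
  apply aux_cancel M hb hbb
  · rw [A, M.add_assoc, M.add_assoc, A, M.add_comm w n, ← M.add_assoc, ← M.add_assoc, A]
  · rw [L, M.add_assoc, L, L]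

theorem aux_half_neg (M : MVAlg X) (z b n : X) (hb : M.neg b = n) (hn : M.add n n = n) :
    M.inf (M.neg z) b = M.inf b (M.neg (M.inf z b)) := by
  rw [aux_inf' M _ b n hb hn, M.neg_neg, aux_inf_add M z b n hb hn, aux_inf M _ b n hb hn,
    M.neg_neg]

theorem aux_half_zero (M : MVAlg X) (b n : X) (hb : M.neg b = n) (hn : M.add n n = n) :
    M.inf M.zero b = M.zero := by
  rw [aux_inf M _ b n hb hn]
  change M.neg (M.add M.one n) = _
  rw [aux_one_add, aux_neg_one]

theorem aux_half_surj (M : MVAlg X) (p q b n : X) (hb : M.neg b = n) (hn : M.add n n = n)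
    (hbb : M.add b b = b) (hp : M.le p b) (hq : M.le q n) : M.inf (M.add p q) b = p := by
  apply aux_cancel M hb hbb
  · rw [aux_inf_add M _ b n hb hn, M.add_assoc, aux_le M hq hn]
  · rw [aux_le M (aux_inf_le M _ b n hb hn) hbb, aux_le M hp hbb]

theorem aux_compl (M : MVAlg X) (a b : X) (hsup : M.sup a b = M.one)
    (hinf : M.inf a b = M.zero) : M.neg a = b := by
  have h1 : M.le (M.add (M.neg a) b) (M.neg a) := by
    unfold inf mul at hinf
    unfold le
    rw [M.add_comm, ← M.neg_neg (M.add (M.neg a) _), hinf]; rfl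
  have h2 : M.le (M.add (M.neg a) b) b := hsup
  have e1 := aux_antisymm M h1 (aux_le_add M _ _)
  have e2 := aux_antisymm M h2 (by rw [M.add_comm]; exact aux_le_add M _ _)
  exact e1.symm.trans e2

end MVAlg

theorem stmt_15 {X : Type} (M : MVAlg X) (x₁ x₂ : X)
    (h₁ : M.add x₁ x₁ = x₁) (h₂ : M.add x₂ x₂ = x₂)
    (hsup : M.sup x₁ x₂ = M.one) (hinf : M.inf x₁ x₂ = M.zero) :
    ∃ φ : X → X × X,
      (∀ z : X, φ z = (M.inf z x₁, M.inf z x₂)) ∧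
      Function.Injective φ ∧
      Set.range φ = {p : X × X | M.le p.1 x₁ ∧ M.le p.2 x₂} ∧
      (∀ z w : X, φ (M.add z w) = (M.add (φ z).1 (φ w).1, M.add (φ z).2 (φ w).2)) ∧
      (∀ z : X, φ (M.neg z) = (M.inf x₁ (M.neg (φ z).1), M.inf x₂ (M.neg (φ z).2))) ∧
      φ M.zero = (M.zero, M.zero) := by
  have c₁ : M.neg x₁ = x₂ := MVAlg.aux_compl M x₁ x₂ hsup hinf
  have c₂ : M.neg x₂ = x₁ := by rw [← c₁, M.neg_neg]
  refine ⟨fun z => (M.inf z x₁, M.inf z x₂), fun z => rfl, ?_, ?_, ?_, ?_, ?_⟩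
  · intro z w h
    obtain ⟨ha, hb⟩ := Prod.mk.inj h
    apply MVAlg.aux_cancel M c₁ h₁
    · rw [← MVAlg.aux_inf_add M z x₁ x₂ c₁ h₂, ha, MVAlg.aux_inf_add M w x₁ x₂ c₁ h₂]
    · rw [← MVAlg.aux_inf_add M z x₂ x₁ c₂ h₁, hb, MVAlg.aux_inf_add M w x₂ x₁ c₂ h₁]
  · ext ⟨p, q⟩
    constructor
    · rintro ⟨z, hz⟩
      obtain ⟨ha, hb⟩ := Prod.mk.inj hz
      subst ha hb
      exact ⟨MVAlg.aux_inf_le M z x₁ x₂ c₁ h₂, MVAlg.aux_inf_le M z x₂ x₁ c₂ h₁⟩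
    · rintro ⟨hp, hq⟩
      refine ⟨M.add p q, Prod.ext ?_ ?_⟩
      · exact MVAlg.aux_half_surj M p q x₁ x₂ c₁ h₂ h₁ hp hq
      · change M.inf (M.add p q) x₂ = q
        rw [M.add_comm]
        exact MVAlg.aux_half_surj M q p x₂ x₁ c₂ h₁ h₂ hq hp
  · intro z w
    exact Prod.ext (MVAlg.aux_half_add M z w x₁ x₂ c₁ h₂ h₁)
      (MVAlg.aux_half_add M z w x₂ x₁ c₂ h₁ h₂)
  · intro z
    exact Prod.ext (MVAlg.aux_half_neg M z x₁ x₂ c₁ h₂) (MVAlg.aux_half_neg M z x₂ x₁ c₂ h₁)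
  · exact Prod.ext (MVAlg.aux_half_zero M x₁ x₂ c₁ h₂) (MVAlg.aux_half_zero M x₂ x₁ c₂ h₁)
end

section
/- In Chang's MV-algebra (equivalently, in the MV-algebra of the lexicographic group Z ×_lex Z with strong unit (1,0)), there exist elements x, y such that the Fibonacci sequence u₀ = x, u₁ = y, u_{n+2} = u_n ⊕ u_{n+1} is not eventually stationary. -/
/-- Lexicographic order on `ℤ × ℤ`. -/
def lexLe (p q : ℤ × ℤ) : Prop := p.1 < q.1 ∨ (p.1 = q.1 ∧ p.2 ≤ q.2)

open Classical

/-- Truncated addition on the interval `[(0,0),(1,0)]` of `ℤ ×_lex ℤ`: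
`x ⊕ y = min (x + y) (1,0)` in the lexicographic order. -/
noncomputable def changAdd (p q : ℤ × ℤ) : ℤ × ℤ :=
  if lexLe (p.1 + q.1, p.2 + q.2) (1, 0) then (p.1 + q.1, p.2 + q.2) else (1, 0)

/-- Fibonacci sequence for the truncated addition. -/
noncomputable def changFib (x y : ℤ × ℤ) : ℕ → ℤ × ℤ
  | 0 => x
  | 1 => y
  | (n + 2) => changAdd (changFib x y n) (changFib x y (n + 1))

theorem stmt_18 :
    ∃ x y : ℤ × ℤ,
      (lexLe (0, 0) x ∧ lexLe x (1, 0)) ∧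
      (lexLe (0, 0) y ∧ lexLe y (1, 0)) ∧
      ¬ ∃ k : ℕ, ∀ n ≥ k, changFib x y n = changFib x y k := by
  have key : ∀ n : ℕ, ∃ a b : ℤ, 0 < a ∧ 0 < b ∧
      changFib (0, 1) (0, 1) n = (0, a) ∧ changFib (0, 1) (0, 1) (n + 1) = (0, b) := by
    intro n
    induction n with
    | zero => exact ⟨1, 1, by norm_num, by norm_num, rfl, rfl⟩
    | succ n ih =>
      obtain ⟨a, b, ha, hb, h1, h2⟩ := ih
      refine ⟨b, a + b, hb, by omega, h2, ?_⟩
      rw [changFib, h1, h2]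
      simp [changAdd, lexLe]
  refine ⟨(0, 1), (0, 1), ⟨by simp [lexLe], by simp [lexLe]⟩,
    ⟨by simp [lexLe], by simp [lexLe]⟩, ?_⟩
  rintro ⟨k, hk⟩
  obtain ⟨a, b, ha, hb, h1, h2⟩ := key k
  have e1 := hk (k + 1) (by omega)
  have e2 := hk (k + 2) (by omega)
  rw [changFib, e1, h1] at e2
  simp [changAdd, lexLe] at e2
  omega
end
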